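/- arXiv:2505.05662 — 2 statements merged into one kernel-verified Lean document; each statement's English description precedes it below -/
import Mathlib

section
/- For every k ∈ ℕ, the graph G = K₁ ∨ Θ(2,2,2k) is enumeratively chromatic-choosable; that is, P_ℓ(G,m) = P(G,m) for every integer m ≥ 3 = χ(G). -/
/-!
Conditioning on the color `c` of the apex `w` gives `P(K₁ ∨ Θ, L) = ∑ c ∈ L(w), P(Θ, L - c)`, where the
lists `L - c` have size at least `n = m - 1`.

For `n ≥ 3` each summand is at least `P(Θ, n)`. Let `D = ((n - 1) ^ (2k) - 1) / n` be the number of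
colorings of a path of length `2k` from constant lists between two given different end colors, and
`D + 1` the number for equal ones. For arbitrary lists, `D` is still a lower bound (`pathMin_le`), and
the total over all pairs of end colors grows with the number of list changes along the path
(`total_sum`). With `q = n - 2` in the role of `D` for the short paths, and nonnegative excesses `a`,
`b`, `e`, one has `P(Θ, L) = ∑ (q + a)(q + b)(D + e)` over the pairs of end colors. The linear terms are
bounded by the totals. The remaining ones are needed only for equal end colors, where `a, b ≥ 1`; if
`e = 0` for some of these, the lists along the long path are not constant, and the gain in the totals
is large enough (`thetaSum_ge`).

For `n = 2` the summands may be smaller than `P(Θ, 2) = 2`, but they are positive, since `Θ(2,2,2k)` is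
2-choosable (`thetaSum_pos`), and grow with the number of vertices whose lists miss `c`
(`card_add_one_le_numListColorings`). If a summand equals `1`, the other two colors of the apex are
missing from at least three lists altogether (`missing_of_numListColorings_le_one`), so the sum is
still at least `6 = P(K₁ ∨ Θ, 3)`.
-/

/-- A proper `L`-coloring of `G`: each vertex gets a color from its list,
and adjacent vertices get different colors. -/
def IsProperListColoring {V : Type*} (G : SimpleGraph V) (L : V → Finset ℕ) (f : V → ℕ) : Prop :=
  (∀ v, f v ∈ L v) ∧ ∀ ⦃u w : V⦄, G.Adj u w → f u ≠ f w

/-- `P(G,L)`: the number of proper `L`-colorings of `G`. -/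
noncomputable def numListColorings {V : Type*} (G : SimpleGraph V) (L : V → Finset ℕ) : ℕ :=
  Nat.card {f : V → ℕ // IsProperListColoring G L f}

/-- The chromatic polynomial `P(G,m)`: the number of proper colorings using colors from `{1,…,m}`. -/
noncomputable def chromPoly {V : Type*} (G : SimpleGraph V) (m : ℕ) : ℕ :=
  numListColorings G (fun _ => Finset.Icc 1 m)

/-- The list color function `P_ℓ(G,m)`: the minimum number of proper `L`-colorings
over all `m`-assignments `L`. -/
noncomputable def listColorFn {V : Type*} (G : SimpleGraph V) (m : ℕ) : ℕ :=
  sInf {n | ∃ L : V → Finset ℕ, (∀ v, (L v).card = m) ∧ numListColorings G L = n}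

/-- The generalized theta graph `Θ(2,2,2k)` on vertex set `Fin (2k+3)`:
`u = 0`, `v = 1`, the internal vertices of the two paths of length 2 are `2` and `3`,
and the internal vertices `z_1, …, z_{2k-1}` of the path of length `2k` are `4, …, 2k+2`. -/
def thetaGraph (k : ℕ) : SimpleGraph (Fin (2*k+3)) :=
  SimpleGraph.fromRel (fun a b =>
    (a.val = 0 ∧ b.val = 2) ∨ (a.val = 2 ∧ b.val = 1) ∨
    (a.val = 0 ∧ b.val = 3) ∨ (a.val = 3 ∧ b.val = 1) ∨
    (a.val = 0 ∧ b.val = 4) ∨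
    (4 ≤ a.val ∧ b.val = a.val + 1 ∧ a.val + 1 ≤ 2*k+2) ∨
    (a.val = 2*k+2 ∧ b.val = 1))

/-- The join `K₁ ∨ G`: a new vertex (`none`) joined to every vertex of `G`. -/
def joinK1 {V : Type*} (G : SimpleGraph V) : SimpleGraph (Option V) :=
  SimpleGraph.fromRel (fun a b =>
    (∃ u, a = none ∧ b = some u) ∨ (∃ u w, a = some u ∧ b = some w ∧ G.Adj u w))

/-! ### Colorings of a path with prescribed end colors -/

/-- `pathCount zs a b` counts the proper list colorings of the internal vertices of a path whose end
vertices are colored `a` and `b`, where `zs` holds the lists of the internal vertices in order, from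
the `a` end to the `b` end. With no internal vertex the ends are adjacent, so the count is `0` if
`a = b` and `1` otherwise. -/
def pathCount : List (Finset ℕ) → ℕ → ℕ → ℕ
  | [], a, b => if a = b then 0 else 1
  | Z :: zs, a, b => ∑ c ∈ Z.erase a, pathCount zs c b

/-- The least value of `pathCount zs a b` over paths with `2 * j + 1` internal vertices and lists of
size `n = q + 2`. It is `((n - 1) ^ (2 * j + 2) - 1) / n` (see `pathMin_mul`); the recursion avoids
the division. The minimum is attained at `a ≠ b` when all lists agree (`pathCount_const`). -/
def pathMin (q : ℕ) : ℕ → ℕ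
  | 0 => q
  | j + 1 => (q + 1) ^ 2 * pathMin q j + q

/-- The number of list changes along a path with end lists `U`, `V` and internal lists `zs`: at each
step, count the colors that are in the new list and not in the previous one. -/
def changes : Finset ℕ → List (Finset ℕ) → Finset ℕ → ℕ
  | U, [], V => (V \ U).card
  | U, Z :: zs, V => (Z \ U).card + changes Z zs V

lemma pathMin_mul (q j : ℕ) : (q + 2) * pathMin q j + 1 = (q + 1) ^ (2 * j + 2) := by
  induction j with
  | zero => simp only [pathMin]; ring
  | succ j ih =>
    rw [show 2 * (j + 1) + 2 = (2 * j + 2) + 2 by ring, pow_add, ← ih]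
    simp only [pathMin]; ring

lemma card_erase_eq_sum (S : Finset ℕ) (b : ℕ) :
    (S.erase b).card = ∑ c ∈ S, (if c = b then 0 else 1) := by
  rw [Finset.card_eq_sum_ones, ← Finset.filter_ne', Finset.sum_filter]
  exact Finset.sum_congr rfl fun c _ => by split_ifs <;> simp_all

lemma pathCount_singleton (X : Finset ℕ) (a b : ℕ) :
    pathCount [X] a b = ((X.erase a).erase b).card := by
  rw [card_erase_eq_sum]
  rfl

lemma le_card_erase {X : Finset ℕ} {q : ℕ} (h : X.card = q + 2) (a : ℕ) :
    q + 1 ≤ (X.erase a).card := by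
  have := Finset.pred_card_le_card_erase (s := X) (a := a)
  omega

/-- Coloring greedily from the `a` end, with `b` ranging over the list `V` of the far end. -/
lemma row_sum {q : ℕ} {V : Finset ℕ} (hV : V.card = q + 2) :
    ∀ (zs : List (Finset ℕ)), (∀ Z ∈ zs, Z.card = q + 2) → ∀ a,
      (q + 1) ^ (zs.length + 1) ≤ ∑ b ∈ V, pathCount zs a b := by
  intro zs
  induction zs with
  | nil =>
    intro _ a
    have h := le_card_erase hV a
    rw [card_erase_eq_sum] at h
    simpa [pathCount, eq_comm] using h
  | cons Z zs ih =>
    intro h a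
    simp only [pathCount]
    rw [Finset.sum_comm]
    have h1 := le_card_erase (h Z (by simp)) a
    have h2 : (Z.erase a).card * (q + 1) ^ (zs.length + 1) ≤
        ∑ c ∈ Z.erase a, ∑ b ∈ V, pathCount zs c b := by
      rw [← smul_eq_mul]
      exact Finset.card_nsmul_le_sum _ _ _ fun c _ => ih (fun Y hY => h Y (by simp [hY])) c
    calc _ = (q + 1) * (q + 1) ^ (zs.length + 1) := by rw [List.length_cons, pow_succ']
      _ ≤ _ := Nat.mul_le_mul_right _ h1
      _ ≤ _ := h2

lemma sum_pathCount_cons (U Z : Finset ℕ) (zs : List (Finset ℕ)) (b : ℕ) :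
    ∑ a ∈ U, pathCount (Z :: zs) a b = ∑ c ∈ Z, (U.erase c).card * pathCount zs c b := by
  simp only [pathCount]
  rw [Finset.sum_comm' (t' := Z) (s' := fun c => U.erase c)]
  · simp
  · intro x y; simp only [Finset.mem_erase]; tauto

/-- The mirror image of `row_sum`: the color `b` is fixed and `a` ranges over the list `U`. -/
lemma col_sum {q : ℕ} :
    ∀ (zs : List (Finset ℕ)), (∀ Z ∈ zs, Z.card = q + 2) → ∀ (U : Finset ℕ), U.card = q + 2 →
      ∀ b, (q + 1) ^ (zs.length + 1) ≤ ∑ a ∈ U, pathCount zs a b := by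
  intro zs
  induction zs with
  | nil =>
    intro _ U hU b
    have h := le_card_erase hU b
    rw [card_erase_eq_sum] at h
    simpa [pathCount] using h
  | cons Z zs ih =>
    intro h U hU b
    rw [sum_pathCount_cons]
    calc _ = (q + 1) * (q + 1) ^ (zs.length + 1) := by rw [List.length_cons, pow_succ']
      _ ≤ (q + 1) * ∑ c ∈ Z, pathCount zs c b :=
        Nat.mul_le_mul_left _ (ih (fun Y hY => h Y (by simp [hY])) Z (h Z (by simp)) b)
      _ ≤ _ := by
        rw [Finset.mul_sum]
        exact Finset.sum_le_sum fun c _ => Nat.mul_le_mul_right _ (le_card_erase hU c)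

/-- By induction, two internal vertices at a time. If all colors `d` of the second list attained the
minimum for the remaining path, the column sum `col_sum` would be violated by one; so some `d₀`
exceeds it, and every choice of the first internal vertex other than `d₀` gains one coloring. -/
lemma pathMin_le {q : ℕ} : ∀ (j : ℕ) (zs : List (Finset ℕ)), zs.length = 2 * j + 1 →
    (∀ Z ∈ zs, Z.card = q + 2) → ∀ a b, pathMin q j ≤ pathCount zs a b := by
  intro j
  induction j with
  | zero =>
    intro zs hl h a b
    obtain ⟨X, rfl⟩ := List.length_eq_one_iff.mp hl
    rw [pathCount_singleton]
    have h1 := le_card_erase (h X (by simp)) a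
    have h2 := Finset.pred_card_le_card_erase (s := X.erase a) (a := b)
    simp only [pathMin]
    omega
  | succ j ih =>
    intro zs hl h a b
    match zs, hl with
    | Z :: Z' :: zs, hl =>
    have hl' : zs.length = 2 * j + 1 := by simp at hl; omega
    have hzs : ∀ Y ∈ zs, Y.card = q + 2 := fun Y hY => h Y (by simp [hY])
    have hZ' : Z'.card = q + 2 := h Z' (by simp)
    have hmin := fun d => ih zs hl' hzs d b
    -- `(q + 2) * pathMin q j` falls short of the column sum by one.
    obtain ⟨d₀, hd₀, hlt⟩ : ∃ d ∈ Z', pathMin q j < pathCount zs d b := by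
      by_contra! hcon
      have h1 := col_sum zs hzs Z' hZ' b
      have h2 := Finset.sum_le_card_nsmul Z' _ _ hcon
      rw [hZ', smul_eq_mul] at h2
      have h3 := pathMin_mul q j
      rw [hl'] at h1
      have : 2 * j + 1 + 1 = 2 * j + 2 := rfl
      rw [this] at h1
      omega
    have hin : ∀ c, (q + 1) * pathMin q j + (if c = d₀ then 0 else 1) ≤
        pathCount (Z' :: zs) c b := by
      intro c
      have hc : (q + 1) * pathMin q j ≤ ∑ d ∈ Z'.erase c, pathMin q j := by
        rw [Finset.sum_const, smul_eq_mul]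
        exact Nat.mul_le_mul_right _ (le_card_erase hZ' c)
      simp only [pathCount]
      split_ifs with hcd
      · exact hc.trans (Finset.sum_le_sum fun d _ => hmin d)
      · exact Nat.succ_le_of_lt (hc.trans_lt (Finset.sum_lt_sum (fun d _ => hmin d)
          ⟨d₀, by simp [hd₀, Ne.symm hcd], hlt⟩))
    have h1 := le_card_erase (h Z (by simp)) a
    have h2 := Finset.pred_card_le_card_erase (s := Z.erase a) (a := d₀)
    have h3 := (card_erase_eq_sum (Z.erase a) d₀).symm
    rw [pathCount]
    calc pathMin q (j + 1) = (q + 1) * ((q + 1) * pathMin q j) + q := by simp only [pathMin]; ring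
      _ ≤ (Z.erase a).card * ((q + 1) * pathMin q j) + ((Z.erase a).erase d₀).card :=
        Nat.add_le_add (Nat.mul_le_mul_right _ h1) (by omega)
      _ = ∑ c ∈ Z.erase a, ((q + 1) * pathMin q j + (if c = d₀ then 0 else 1)) := by
        rw [Finset.sum_add_distrib, h3, Finset.sum_const, smul_eq_mul]
      _ ≤ _ := Finset.sum_le_sum fun c _ => hin c

lemma card_erase_eq {U : Finset ℕ} {q : ℕ} (hU : U.card = q + 2) (c : ℕ) :
    (U.erase c).card = (q + 1) + (if c ∈ U then 0 else 1) := by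
  rw [Finset.card_erase_eq_ite]; split_ifs <;> omega

/-- Total number of colorings of the path including its ends. When all lists equal a set of size
`n = q + 2`, it is `n * (n - 1) ^ (zs.length + 1)`. Each color of a list that is missing from the
preceding one is compatible with all `n` colors there instead of `n - 1`, which contributes at
least `(n - 1) ^ zs.length` further colorings. -/
lemma total_sum {q : ℕ} {V : Finset ℕ} (hV : V.card = q + 2) :
    ∀ (zs : List (Finset ℕ)), (∀ Z ∈ zs, Z.card = q + 2) → ∀ (U : Finset ℕ), U.card = q + 2 →
      (q + 2) * (q + 1) ^ (zs.length + 1) + (q + 1) ^ zs.length * changes U zs V ≤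
        ∑ a ∈ U, ∑ b ∈ V, pathCount zs a b := by
  have key : ∀ U Z : Finset ℕ, (Z \ U).card = ∑ c ∈ Z, (if c ∈ U then 0 else 1) := by
    intro U Z
    rw [Finset.card_eq_sum_ones, ← Finset.filter_notMem_eq_sdiff, Finset.sum_filter]
    exact Finset.sum_congr rfl fun c _ => by split_ifs <;> simp_all
  intro zs
  induction zs with
  | nil =>
    intro _ U hU
    rw [Finset.sum_comm]
    have : ∀ b ∈ V, ∑ a ∈ U, pathCount [] a b = (q + 1) + (if b ∈ U then 0 else 1) := by
      intro b _
      rw [← card_erase_eq hU, card_erase_eq_sum]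
      rfl
    rw [Finset.sum_congr rfl this, Finset.sum_add_distrib, ← key]
    simp [changes, hV]
  | cons Z zs ih =>
    intro h U hU
    have hzs : ∀ Y ∈ zs, Y.card = q + 2 := fun Y hY => h Y (by simp [hY])
    have hZ := h Z (by simp)
    have e1 : ∑ a ∈ U, ∑ b ∈ V, pathCount (Z :: zs) a b =
        ∑ c ∈ Z, (U.erase c).card * ∑ b ∈ V, pathCount zs c b := by
      rw [Finset.sum_comm, Finset.sum_congr rfl fun b _ => sum_pathCount_cons U Z zs b,
        Finset.sum_comm]
      exact Finset.sum_congr rfl fun c _ => by rw [Finset.mul_sum]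
    have e2 : ∀ c ∈ Z, (q + 1) * ∑ b ∈ V, pathCount zs c b +
        (if c ∈ U then 0 else 1) * (q + 1) ^ (zs.length + 1) ≤
        (U.erase c).card * ∑ b ∈ V, pathCount zs c b := by
      intro c _
      rw [card_erase_eq hU, add_mul (q + 1)]
      exact Nat.add_le_add_left (Nat.mul_le_mul_left _ (row_sum hV zs hzs c)) _
    have e3 := Finset.sum_le_sum e2
    rw [Finset.sum_add_distrib, ← Finset.mul_sum, ← Finset.sum_mul, ← key] at e3
    have e4 := Nat.mul_le_mul_left (q + 1) (ih hzs Z hZ)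
    rw [e1]
    refine le_trans (le_of_eq ?_) (le_trans (Nat.add_le_add_right e4 _) e3)
    simp only [changes, List.length_cons]
    ring

lemma card_sdiff_triangle (U Y V : Finset ℕ) :
    (V \ U).card ≤ (Y \ U).card + (V \ Y).card := by
  refine (Finset.card_le_card ?_).trans (Finset.card_union_le _ _)
  intro x; simp only [Finset.mem_union, Finset.mem_sdiff]; tauto

/-- The number of changes is at least that of the shortcut `U`, `Z`, `V` through any internal list. -/
lemma le_changes {V Z : Finset ℕ} : ∀ (zs : List (Finset ℕ)) (U : Finset ℕ), Z ∈ zs →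
    (Z \ U).card + (V \ Z).card ≤ changes U zs V := by
  have h0 : ∀ (zs : List (Finset ℕ)) (U : Finset ℕ), (V \ U).card ≤ changes U zs V := by
    intro zs
    induction zs with
    | nil => intro U; simp [changes]
    | cons Y zs ih =>
      intro U
      exact (card_sdiff_triangle U Y V).trans (Nat.add_le_add_left (ih Y) _)
  intro zs
  induction zs with
  | nil => simp
  | cons Y zs ih =>
    intro U hZ
    simp only [changes]
    rcases List.mem_cons.mp hZ with rfl | hZ
    · exact Nat.add_le_add_left (h0 zs _) _
    · have := ih Y hZ
      have := card_sdiff_triangle U Y Z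
      omega

/-- For constant lists the number of colorings exceeds the minimum by one exactly when the two ends
receive the same color. -/
lemma pathCount_const {q : ℕ} {U : Finset ℕ} (hU : U.card = q + 2) : ∀ (j : ℕ)
    (zs : List (Finset ℕ)), zs.length = 2 * j + 1 → (∀ Z ∈ zs, Z = U) → ∀ a ∈ U, ∀ b ∈ U,
    pathCount zs a b = pathMin q j + (if a = b then 1 else 0) := by
  have hcard : ∀ c ∈ U, (U.erase c).card = q + 1 := by
    intro c hc; rw [Finset.card_erase_of_mem hc, hU]; rfl
  intro j
  induction j with
  | zero =>
    intro zs hl h a ha b hb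
    obtain ⟨X, rfl⟩ := List.length_eq_one_iff.mp hl
    obtain rfl : X = U := h X (by simp)
    rw [pathCount_singleton, Finset.card_erase_eq_ite, hcard a ha]
    simp only [Finset.mem_erase, hb, and_true, pathMin]
    split_ifs <;> simp_all
  | succ j ih =>
    intro zs hl h a ha b hb
    match zs, hl with
    | Z :: Z' :: zs, hl =>
    have hl' : zs.length = 2 * j + 1 := by simp at hl; omega
    obtain rfl : Z = U := h Z (by simp)
    obtain rfl : Z' = Z := h Z' (by simp)
    have hmin := ih zs hl' (fun Y hY => h Y (by simp [hY]))
    have hin : ∀ c ∈ Z'.erase a, pathCount (Z' :: zs) c b =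
        (q + 1) * pathMin q j + (if b ∈ Z'.erase c then 1 else 0) := by
      intro c hc
      have hc' := Finset.mem_of_mem_erase hc
      simp only [pathCount]
      rw [Finset.sum_congr rfl fun d hd => hmin d (Finset.mem_of_mem_erase hd) b hb,
        Finset.sum_add_distrib, Finset.sum_const, hcard c hc', smul_eq_mul,
        Finset.sum_ite_eq' (Z'.erase c) b]
    have h3 : ∑ c ∈ Z'.erase a, (if b ∈ Z'.erase c then 1 else 0) =
        ((Z'.erase a).erase b).card := by
      rw [card_erase_eq_sum]
      exact Finset.sum_congr rfl fun c _ => by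
        by_cases hbc : b = c <;> simp [hb, hbc, Ne.symm]
    rw [pathCount, Finset.sum_congr rfl hin, Finset.sum_add_distrib, h3, Finset.sum_const,
      smul_eq_mul, hcard a ha, Finset.card_erase_eq_ite, hcard a ha]
    simp only [Finset.mem_erase, hb, and_true, pathMin, ne_eq]
    by_cases hab : a = b
    · subst hab; simp; ring
    · simp [hab, Ne.symm hab]; ring

/-! ### The lower bound for theta graphs with lists of size at least three -/

/-- The number of list colorings of a theta graph with two paths of length two and one longer path,
as a sum over the pairs of colors of its ends: `U`, `V` are the lists of the ends, `X`, `Y` those of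
the two midpoints and `zs` those of the internal vertices of the longer path. -/
def thetaSum (U V X Y : Finset ℕ) (zs : List (Finset ℕ)) : ℕ :=
  ∑ p ∈ U ×ˢ V, pathCount [X] p.1 p.2 * pathCount [Y] p.1 p.2 * pathCount zs p.1 p.2

/-- The value of `thetaSum` for constant lists of size `n = q + 2`, where `D` is the number of colorings
of the long path between ends of different colors: `n` pairs of equal end colors contribute
`(n - 1) ^ 2 * (D + 1)` each, and `n * (n - 1)` pairs of distinct ones `q ^ 2 * D` each. -/
def thetaConst (q D : ℕ) : ℕ := (q + 2) * ((q + 1) ^ 2 * (D + 1) + (q + 1) * q ^ 2 * D)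

lemma sum_ite_diag {α : Type*} [DecidableEq α] (U V : Finset α) :
    ∑ p ∈ U ×ˢ V, (if p.1 = p.2 then 1 else 0) = (U ∩ V).card := by
  rw [Finset.sum_product]
  simp only [Finset.sum_ite_eq]
  rw [← Finset.filter_mem_eq_inter, Finset.card_filter]

/-- Write `A = q + a`, `B = q + b`, `N = D + e` and expand the product. The terms of degree at most one
in `a`, `b`, `e` are controlled by the three total sums. The other terms are nonnegative, and where
the indicator `δ` of the diagonal is `1` they are at least `D + κ * (2 * q + 1)`, since there
`a, b ≥ 1` and `e ≥ κ`. The parameter `κ ∈ {0, 1}` of the application says whether the excess `e` is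
known to be positive on the diagonal. -/
lemma weighted_sum {ι : Type*} (s : Finset ι) (q D κ : ℕ) (δ A B N : ι → ℕ)
    (hδ : ∀ p ∈ s, δ p ≤ 1)
    (hA : ∀ p ∈ s, q + δ p ≤ A p) (hB : ∀ p ∈ s, q + δ p ≤ B p)
    (hN : ∀ p ∈ s, D + κ * δ p ≤ N p) (α β ν : ℕ)
    (sA : s.card * q + α ≤ ∑ p ∈ s, A p) (sB : s.card * q + β ≤ ∑ p ∈ s, B p)
    (sN : s.card * D + ν ≤ ∑ p ∈ s, N p) :
    s.card * (q ^ 2 * D) + q * D * (α + β) + q ^ 2 * ν + (D + κ * (2 * q + 1)) * ∑ p ∈ s, δ p ≤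
      ∑ p ∈ s, A p * B p * N p := by
  have key : ∀ p ∈ s, q * D * (A p + B p) + q ^ 2 * N p + (D + κ * (2 * q + 1)) * δ p ≤
      A p * B p * N p + 2 * q ^ 2 * D := by
    intro p hp
    obtain ⟨a, ha⟩ := Nat.exists_eq_add_of_le ((Nat.le_add_right _ _).trans (hA p hp))
    obtain ⟨b, hb⟩ := Nat.exists_eq_add_of_le ((Nat.le_add_right _ _).trans (hB p hp))
    obtain ⟨e, he⟩ := Nat.exists_eq_add_of_le ((Nat.le_add_right _ _).trans (hN p hp))
    have h1 := hA p hp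
    have h2 := hB p hp
    have h3 := hN p hp
    have h0 := hδ p hp
    rw [ha] at h1; rw [hb] at h2; rw [he] at h3
    rw [ha, hb, he]
    replace h1 : δ p ≤ a := by omega
    replace h2 : δ p ≤ b := by omega
    replace h3 : κ * δ p ≤ e := by omega
    have hab : δ p ≤ a * b := by
      calc δ p ≤ 1 * δ p := by omega
        _ ≤ a * b := by
          rcases Nat.eq_zero_or_pos (δ p) with h | h
          · simp [h]
          · exact Nat.mul_le_mul (by omega) h2
    have hae : κ * δ p ≤ a * e := by
      rcases Nat.eq_zero_or_pos (δ p) with h | h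
      · simp [h]
      · calc κ * δ p ≤ 1 * e := by omega
          _ ≤ a * e := Nat.mul_le_mul_right _ (by omega)
    have hbe : κ * δ p ≤ b * e := by
      rcases Nat.eq_zero_or_pos (δ p) with h | h
      · simp [h]
      · calc κ * δ p ≤ 1 * e := by omega
          _ ≤ b * e := Nat.mul_le_mul_right _ (by omega)
    have habe : κ * δ p ≤ a * (b * e) := by
      rcases Nat.eq_zero_or_pos (δ p) with h | h
      · simp [h]
      · exact hbe.trans (Nat.le_mul_of_pos_left _ (by omega))
    have e1 := Nat.mul_le_mul_left D hab
    have e2 := Nat.mul_le_mul_left q hae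
    have e3 := Nat.mul_le_mul_left q hbe
    calc _ = 2 * q ^ 2 * D + q ^ 2 * D + q * D * (a + b) + q ^ 2 * e +
          (D * δ p + q * (κ * δ p) + q * (κ * δ p) + κ * δ p) := by ring
      _ ≤ 2 * q ^ 2 * D + q ^ 2 * D + q * D * (a + b) + q ^ 2 * e +
          (D * (a * b) + q * (a * e) + q * (b * e) + a * (b * e)) := by gcongr
      _ = _ := by ring
  have hsum := Finset.sum_le_sum key
  simp only [Finset.sum_add_distrib, ← Finset.mul_sum, Finset.sum_const, smul_eq_mul] at hsum
  have f1 := Nat.mul_le_mul_left (q * D) (Nat.add_le_add sA sB)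
  have f2 := Nat.mul_le_mul_left (q ^ 2) sN
  nlinarith [hsum, f1, f2]

/-- The bound of `weighted_sum` for `κ = 1`. Here `s` is the number of colors common to the two end
lists and `t` the number of the others; each of the `t` colors costs one pair of equal end
colors, but forces a list change on both short paths, which outweighs it. -/
lemma arith_diag (q D s t : ℕ) (hq : 1 ≤ q) (hD : 1 ≤ D) (hst : s + t = q + 2) :
    thetaConst q D ≤ (q + 2) ^ 2 * (q ^ 2 * D) +
      q * D * ((q + 2 + (q + 1) * t) + (q + 2 + (q + 1) * t)) + q ^ 2 * (q + 2) +
      (D + 1 * (2 * q + 1)) * s := by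
  have h : D + 2 * q + 1 ≤ 2 * q * (q + 1) * D := by
    obtain ⟨q, rfl⟩ := Nat.exists_eq_add_of_le hq
    obtain ⟨D, rfl⟩ := Nat.exists_eq_add_of_le hD
    ring_nf
    nlinarith [Nat.zero_le (q * D), Nat.zero_le (q ^ 2 * D), Nat.zero_le (q ^ 2)]
  have h' := Nat.mul_le_mul_right t h
  have e : thetaConst q D = (q + 2) ^ 2 * (q ^ 2 * D) + q * D * (2 * (q + 2)) + q ^ 2 * (q + 2) +
      (D + 2 * q + 1) * (s + t) := by
    rw [hst, thetaConst]; ring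
  rw [e]
  nlinarith [h']

/-- The bound of `weighted_sum` for `κ = 0`. The loss of the higher order terms on the diagonal is
repaid by `t` differing colors of the end lists or by `ν ≥ 2` list changes along the long path. -/
lemma arith_nondiag (q D s t ν M : ℕ) (hq : 1 ≤ q) (hD : (q + 1) ^ 2 * q + q ≤ D)
    (hst : s + t = q + 2) (hM : (q + 1) ^ 3 ≤ M)
    (ht : 1 ≤ t ∨ 2 ≤ ν) :
    thetaConst q D ≤ (q + 2) ^ 2 * (q ^ 2 * D) +
      q * D * ((q + 2 + (q + 1) * t) + (q + 2 + (q + 1) * t)) + q ^ 2 * (q + 2 + M * ν) +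
      (D + 0 * (2 * q + 1)) * s := by
  have e : thetaConst q D = (q + 2) ^ 2 * (q ^ 2 * D) + q * D * (2 * (q + 2)) + q ^ 2 * (q + 2) +
      D * (s + t) + (2 * q + 1) * (q + 2) := by
    rw [hst, thetaConst]; ring
  suffices h : D * t + (2 * q + 1) * (q + 2) ≤ 2 * q * (q + 1) * D * t + q ^ 2 * (M * ν) by
    rw [e]; nlinarith [h]
  have hD1 : D * t ≤ q ^ 2 * D * t := by
    rw [mul_assoc]; exact Nat.le_mul_of_pos_left _ (by positivity)
  rcases ht with ht | ht
  · have h1 : (2 * q + 1) * (q + 2) ≤ q * (q + 2) * D := by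
      have : (2 * q + 1) ≤ q * D := by
        calc 2 * q + 1 ≤ q * ((q + 1) ^ 2 * q + q) := by
              obtain ⟨q, rfl⟩ := Nat.exists_eq_add_of_le hq
              ring_nf
              nlinarith [Nat.zero_le (q ^ 2), Nat.zero_le (q ^ 3), Nat.zero_le (q ^ 4)]
          _ ≤ _ := Nat.mul_le_mul_left _ hD
      calc _ ≤ (q * D) * (q + 2) := Nat.mul_le_mul_right _ this
        _ = _ := by ring
    have h2 : q * (q + 2) * D ≤ q * (q + 2) * D * t := Nat.le_mul_of_pos_right _ ht
    have e2 : 2 * q * (q + 1) * D * t = q ^ 2 * D * t + q * (q + 2) * D * t := by ring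
    omega
  · have h1 : (2 * q + 1) * (q + 2) ≤ q ^ 2 * (M * ν) := by
      calc (2 * q + 1) * (q + 2) ≤ 1 * ((q + 1) ^ 3 * 2) := by
            nlinarith [Nat.zero_le (q ^ 3), hq]
        _ ≤ q ^ 2 * (M * ν) :=
          Nat.mul_le_mul (Nat.one_le_pow _ _ hq) (Nat.mul_le_mul hM ht)
    have h2 : q ^ 2 * D * t ≤ 2 * q * (q + 1) * D * t := by
      apply Nat.mul_le_mul_right; apply Nat.mul_le_mul_right; nlinarith
    omega

/-- Among assignments of lists of size `q + 2 ≥ 3`, constant ones minimize the number of colorings.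
Either the long path always has more than the minimal number of colorings between equal ends, which
alone suffices, or the lists along it are not all equal, and the list changes make up for it. -/
lemma thetaSum_ge {q j : ℕ} (hq : 1 ≤ q) {U V X Y : Finset ℕ} {zs : List (Finset ℕ)}
    (hU : U.card = q + 2) (hV : V.card = q + 2) (hX : X.card = q + 2) (hY : Y.card = q + 2)
    (hl : zs.length = 2 * j + 1) (hz : ∀ Z ∈ zs, Z.card = q + 2) :
    thetaConst q (pathMin q j) ≤ thetaSum U V X Y zs := by
  set D := pathMin q j with hDdef
  have hs : (U ×ˢ V).card = (q + 2) ^ 2 := by rw [Finset.card_product, hU, hV]; ring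
  have hst : (U ∩ V).card + (V \ U).card = q + 2 := by
    rw [Finset.inter_comm, Finset.card_inter_add_card_sdiff, hV]
  have hW : ∀ X : Finset ℕ, X.card = q + 2 → ∀ p ∈ U ×ˢ V,
      q + (if p.1 = p.2 then 1 else 0) ≤ pathCount [X] p.1 p.2 := by
    intro X hX p _
    split_ifs with h
    · rw [pathCount_singleton, h, Finset.erase_idem]; exact le_card_erase hX _
    · exact pathMin_le 0 [X] rfl (by simpa using hX) _ _
  have sW : ∀ X : Finset ℕ, X.card = q + 2 → (U ×ˢ V).card * q + (q + 2 + (q + 1) * (V \ U).card) ≤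
      ∑ p ∈ U ×ˢ V, pathCount [X] p.1 p.2 := by
    intro X hX
    have h1 := total_sum hV [X] (by simpa using hX) U hU
    have h2 := card_sdiff_triangle U X V
    rw [Finset.sum_product, hs]
    refine le_trans ?_ h1
    have h3 := Nat.mul_le_mul_left (q + 1) h2
    simp only [changes, List.length_cons, List.length_nil]
    have e1 : (q + 2) * (q + 1) ^ (0 + 1 + 1) = (q + 2) ^ 2 * q + (q + 2) := by ring
    have e2 : (q + 1) ^ (0 + 1) = q + 1 := by ring
    rw [e1, e2]
    omega
  have sN : (U ×ˢ V).card * D + (q + 2 + (q + 1) ^ (2 * j + 1) * changes U zs V) ≤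
      ∑ p ∈ U ×ˢ V, pathCount zs p.1 p.2 := by
    have h1 := total_sum hV zs hz U hU
    have h2 := pathMin_mul q j
    rw [Finset.sum_product, hs]
    refine le_trans (le_of_eq ?_) h1
    rw [hl, show 2 * j + 1 + 1 = 2 * j + 2 from rfl, ← h2]
    ring
  have hN := fun a b => pathMin_le j zs hl hz a b
  have hDq : q ≤ D := by rw [hDdef]; cases j <;> simp [pathMin]
  have hδ : ∀ p ∈ U ×ˢ V, (if p.1 = p.2 then 1 else 0) ≤ 1 := by
    intro p _; split_ifs <;> simp
  -- If `hdiag` fails, then `j ≠ 0`, since a path of length two has at least `q + 1` colorings between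
  -- equal ends; and the lists `U`, `zs`, `V` are not all equal, by `pathCount_const`.
  by_cases hdiag : ∀ a ∈ U, a ∈ V → D + 1 ≤ pathCount zs a a
  · have := weighted_sum (U ×ˢ V) q D 1 (fun p => if p.1 = p.2 then 1 else 0) _ _
      (fun p => pathCount zs p.1 p.2) hδ (hW X hX) (hW Y hY) (by
        rintro ⟨a, b⟩ hp
        simp only [Finset.mem_product] at hp
        by_cases hab : a = b
        · subst hab; simpa using hdiag a hp.1 hp.2
        · simpa [hab] using hN a b) _ _ _ (sW X hX) (sW Y hY)
        (le_trans (Nat.add_le_add_left (Nat.le_add_right _ _) _) sN)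
    rw [sum_ite_diag, hs] at this
    exact (arith_diag q D _ _ hq (hq.trans hDq) hst).trans this
  · have := weighted_sum (U ×ˢ V) q D 0 (fun p => if p.1 = p.2 then 1 else 0) _ _
      (fun p => pathCount zs p.1 p.2) hδ (hW X hX) (hW Y hY) (by
        rintro ⟨a, b⟩ hp
        simpa using hN a b) _ _ _ (sW X hX) (sW Y hY) sN
    rw [sum_ite_diag, hs] at this
    refine (arith_nondiag q D _ _ _ _ hq ?_ hst ?_ ?_).trans this
    · match j with
      | 0 =>
        exfalso; apply hdiag
        intro a _ _
        obtain ⟨Z, rfl⟩ := List.length_eq_one_iff.mp hl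
        rw [pathCount_singleton, Finset.erase_idem]
        rw [hDdef]; exact le_card_erase (hz Z (by simp)) _
      | j + 1 =>
        have : q ≤ pathMin q j := by cases j <;> simp [pathMin]
        rw [hDdef, pathMin]
        gcongr
    · match j with
      | 0 =>
        exfalso; apply hdiag
        intro a _ _
        obtain ⟨Z, rfl⟩ := List.length_eq_one_iff.mp hl
        rw [pathCount_singleton, Finset.erase_idem]
        rw [hDdef]; exact le_card_erase (hz Z (by simp)) _
      | j + 1 => exact Nat.pow_le_pow_right (by omega) (by omega)
    · by_cases hUV : V ⊆ U
      · right
        obtain rfl : V = U := Finset.eq_of_subset_of_card_le hUV (by omega)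
        by_cases hconst : ∀ Z ∈ zs, Z = V
        · exfalso; apply hdiag
          intro a ha _
          rw [pathCount_const hV j zs hl hconst a ha a ha]; simp [hDdef]
        · push Not at hconst
          obtain ⟨Z, hZ, hne⟩ := hconst
          refine le_trans ?_ (le_changes zs V hZ)
          have h1 : 0 < (Z \ V).card := by
            rw [Finset.card_pos, Finset.sdiff_nonempty]
            exact fun h => hne (Finset.eq_of_subset_of_card_le h (by rw [hV, hz Z hZ]))
          have h2 : 0 < (V \ Z).card := by
            rw [Finset.card_pos, Finset.sdiff_nonempty]
            exact fun h => hne (Finset.eq_of_subset_of_card_le h (by rw [hV, hz Z hZ])).symm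
          omega
      · left
        exact Finset.card_pos.mpr (Finset.sdiff_nonempty.mpr hUV)

lemma thetaSum_const {q j : ℕ} {U : Finset ℕ} {zs : List (Finset ℕ)}
    (hU : U.card = q + 2) (hl : zs.length = 2 * j + 1) (hz : ∀ Z ∈ zs, Z = U) :
    thetaSum U U U U zs = thetaConst q (pathMin q j) := by
  set D := pathMin q j
  have h : ∀ p ∈ U ×ˢ U, pathCount [U] p.1 p.2 * pathCount [U] p.1 p.2 * pathCount zs p.1 p.2 =
      q ^ 2 * D + (if p.1 = p.2 then (q + 1) ^ 2 * (D + 1) - q ^ 2 * D else 0) := by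
    rintro ⟨a, b⟩ hp
    simp only [Finset.mem_product] at hp
    have hle : q ^ 2 * D ≤ (q + 1) ^ 2 * (D + 1) := by gcongr <;> omega
    simp only
    rw [pathCount_const hU j zs hl hz a hp.1 b hp.2,
      pathCount_const hU 0 [U] rfl (by simp) a hp.1 b hp.2]
    simp only [pathMin]
    split_ifs
    · rw [Nat.add_sub_cancel' hle]; ring
    · ring
  have h2 : ∀ c : ℕ, ∑ p ∈ U ×ˢ U, (if p.1 = p.2 then c else 0) = (q + 2) * c := by
    intro c
    have := sum_ite_diag U U
    rw [Finset.inter_self, hU] at this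
    rw [← this, Finset.sum_mul]
    exact Finset.sum_congr rfl fun p _ => by split_ifs <;> simp
  rw [thetaSum, Finset.sum_congr rfl h, Finset.sum_add_distrib, h2, Finset.sum_const,
    Finset.card_product, hU, smul_eq_mul, thetaConst]
  have hle : q ^ 2 * D ≤ (q + 1) ^ 2 * (D + 1) := by gcongr <;> omega
  obtain ⟨r, hr⟩ := Nat.exists_eq_add_of_le hle
  rw [hr, Nat.add_sub_cancel_left]
  ring

/-! ### Two-choosability of the theta graph -/

/-- With lists of size two, suppose that two pairs of end colors, differing at the first end, both admit
no coloring of the path. Then the two pairs use the same two colors, and the parity of the path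
determines in which order. -/
lemma pathCount_eq_zero_pair : ∀ (zs : List (Finset ℕ)), (∀ Z ∈ zs, Z.card = 2) →
    ∀ a a' b b', a ≠ a' → pathCount zs a b = 0 → pathCount zs a' b' = 0 →
      if Even zs.length then b = a ∧ b' = a' else b = a' ∧ b' = a := by
  intro zs
  induction zs with
  | nil =>
    intro _ a a' b b' _ h h'
    have h1 : a = b := by by_contra hc; simp [pathCount, hc] at h
    have h2 : a' = b' := by by_contra hc; simp [pathCount, hc] at h'
    simp [h1, h2]
  | cons Z zs ih =>
    intro hz a a' b b' hne h h'
    have hzs : ∀ Y ∈ zs, Y.card = 2 := fun Y hY => hz Y (by simp [hY])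
    have hZ := hz Z (by simp)
    -- If `a` is not in `Z`, both colors of `Z` are available, and one of them extends.
    have hmem : ∀ a b, pathCount (Z :: zs) a b = 0 → a ∈ Z := by
      intro a b h
      by_contra ha
      rw [pathCount, Finset.erase_eq_of_notMem ha] at h
      have := col_sum (q := 0) zs hzs Z hZ b
      simp [h] at this
    -- Hence `Z` consists of `a` and `a'`. The first internal vertex must take `a'` when
    -- the end is colored `a`, and vice versa, so the shorter path has the same property with the two
    -- colors exchanged.
    have ha := hmem a b h
    have ha' := hmem a' b' h'
    rw [pathCount, Finset.sum_eq_zero_iff] at h h'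
    have := ih hzs a' a b b' hne.symm (h a' (by simp [ha', hne.symm])) (h' a (by simp [ha, hne]))
    rw [List.length_cons]
    by_cases he : Even zs.length <;> simp_all [Nat.even_add_one]

/-- With lists of size two and different end lists, a path of even length excludes at most one of the
four pairs of end colors. -/
lemma card_zero_pairs_le_one {U V : Finset ℕ} (hU : U.card = 2) (hV : V.card = 2) (hUV : U ≠ V)
    {zs : List (Finset ℕ)} (hz : ∀ Z ∈ zs, Z.card = 2) (ho : ¬ Even zs.length) :
    ((U ×ˢ V).filter fun p => pathCount zs p.1 p.2 = 0).card ≤ 1 := by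
  rw [Finset.card_le_one]
  rintro ⟨a, b⟩ h ⟨a', b'⟩ h'
  simp only [Finset.mem_filter, Finset.mem_product] at h h'
  obtain ⟨⟨ha, hb⟩, h⟩ := h
  obtain ⟨⟨ha', hb'⟩, h'⟩ := h'
  have pair : ∀ {S : Finset ℕ} {x y : ℕ}, S.card = 2 → x ∈ S → y ∈ S → x ≠ y → S = {x, y} := by
    intro S x y hS hx hy hxy
    symm
    apply Finset.eq_of_subset_of_card_le
    · intro z; simp only [Finset.mem_insert, Finset.mem_singleton]; rintro (rfl | rfl) <;> assumption
    · rw [hS, Finset.card_pair hxy]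
  by_cases haa : a = a'
  · subst haa
    by_contra hne
    have hbb : b ≠ b' := fun hb => hne (by rw [hb])
    have := row_sum (q := 0) hV zs hz a
    rw [pair hV hb hb' hbb, Finset.sum_pair hbb, h, h'] at this
    simp at this
  · have := pathCount_eq_zero_pair zs hz a a' b b' haa h h'
    rw [if_neg ho] at this
    obtain ⟨rfl, rfl⟩ := this
    exact absurd ((pair hU ha ha' haa).trans (pair hV hb' hb haa).symm) hUV

/-- For different end lists each of the three paths excludes at most one of the four pairs of end colors.
For equal end lists, the short paths admit both pairs of equal colors, and the long path cannot
exclude both of them. -/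
lemma thetaSum_pos {j : ℕ} {U V X Y : Finset ℕ} {zs : List (Finset ℕ)}
    (hU : U.card = 2) (hV : V.card = 2) (hX : X.card = 2) (hY : Y.card = 2)
    (hl : zs.length = 2 * j + 1) (hz : ∀ Z ∈ zs, Z.card = 2) :
    0 < thetaSum U V X Y zs := by
  rw [pos_iff_ne_zero, thetaSum]
  intro h0
  rw [Finset.sum_eq_zero_iff] at h0
  have ho : ¬ Even zs.length := by rw [hl, Nat.not_even_iff_odd]; exact ⟨j, rfl⟩
  have h1 : ∀ X : Finset ℕ, X.card = 2 → ∀ a, pathCount [X] a a ≠ 0 := by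
    intro X hX a
    rw [pathCount_singleton, Finset.erase_idem]
    have := le_card_erase (q := 0) hX a
    omega
  by_cases hUV : U = V
  · subst hUV
    obtain ⟨a, b, hab, hUab⟩ := Finset.card_eq_two.mp hU
    have hzero : ∀ c ∈ U, pathCount zs c c = 0 := by
      intro c hc
      have := h0 (c, c) (by simp [hc])
      simpa [h1 X hX, h1 Y hY] using this
    have := pathCount_eq_zero_pair zs hz a b a b hab (hzero a (by simp [hUab]))
      (hzero b (by simp [hUab]))
    rw [if_neg ho] at this
    exact hab this.1
  · have c1 := card_zero_pairs_le_one hU hV hUV (zs := [X]) (by simpa using hX) (by simp)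
    have c2 := card_zero_pairs_le_one hU hV hUV (zs := [Y]) (by simpa using hY) (by simp)
    have c3 := card_zero_pairs_le_one hU hV hUV hz ho
    have hsub : U ×ˢ V ⊆
        (((U ×ˢ V).filter fun p => pathCount [X] p.1 p.2 = 0) ∪
          ((U ×ˢ V).filter fun p => pathCount [Y] p.1 p.2 = 0)) ∪
          ((U ×ˢ V).filter fun p => pathCount zs p.1 p.2 = 0) := by
      intro p hp
      have := h0 p hp
      simp only [mul_eq_zero] at this
      simp only [Finset.mem_union, Finset.mem_filter]
      tauto
    have := Finset.card_le_card hsub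
    rw [Finset.card_product, hU, hV] at this
    have u1 := Finset.card_union_le
      (((U ×ˢ V).filter fun p => pathCount [X] p.1 p.2 = 0) ∪
          ((U ×ˢ V).filter fun p => pathCount [Y] p.1 p.2 = 0))
          ((U ×ˢ V).filter fun p => pathCount zs p.1 p.2 = 0)
    have u2 := Finset.card_union_le
      ((U ×ˢ V).filter fun p => pathCount [X] p.1 p.2 = 0)
          ((U ×ˢ V).filter fun p => pathCount [Y] p.1 p.2 = 0)
    omega

/-! ### The theta graph as a sum over the colors of its two ends -/

/-- `g` is a proper coloring from the lists `Z` of the `r` internal vertices of a path whose ends are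
colored `a` and `b`. The end conditions are phrased through the values of the indices, so that they
make sense for `r = 0`, where the ends themselves are adjacent. -/
def IsPathColoring {r : ℕ} (Z : Fin r → Finset ℕ) (a b : ℕ) (g : Fin r → ℕ) : Prop :=
  (∀ i, g i ∈ Z i) ∧ (r = 0 → a ≠ b) ∧ (∀ i, i.val = 0 → a ≠ g i) ∧
    (∀ i i', i'.val = i.val + 1 → g i ≠ g i') ∧ ∀ i, i.val + 1 = r → g i ≠ b

/-- Peeling off the first internal vertex, which then plays the role of the end colored `a`. -/
lemma isPathColoring_cons {r : ℕ} (Z : Fin (r + 1) → Finset ℕ) (a b c : ℕ) (g : Fin r → ℕ) :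
    IsPathColoring Z a b (Fin.cons c g : Fin (r + 1) → ℕ) ↔
      c ∈ (Z 0).erase a ∧ IsPathColoring (fun i => Z i.succ) c b g := by
  constructor
  · rintro ⟨h1, _, h3, h4, h5⟩
    refine ⟨Finset.mem_erase.mpr ⟨fun h => h3 0 rfl (by simpa using h.symm), by simpa using h1 0⟩,
      fun i => by simpa using h1 i.succ, ?_, ?_, ?_, ?_⟩
    · intro hr; subst hr; simpa using h5 0 rfl
    · intro i hi; simpa using h4 0 i.succ (by simp [hi])
    · intro i i' hi; simpa using h4 i.succ i'.succ (by simp [hi])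
    · intro i hi; simpa using h5 i.succ (by simp [hi])
  · rintro ⟨hc, h1, h2, h3, h4, h5⟩
    rw [Finset.mem_erase] at hc
    refine ⟨Fin.cases (by simpa using hc.2) fun i => by simpa using h1 i, by simp, ?_, ?_, ?_⟩
    · intro i hi
      obtain rfl : i = 0 := Fin.ext hi
      simpa using hc.1.symm
    · intro i i'
      refine Fin.cases ?_ (fun i => ?_) i <;> refine Fin.cases ?_ (fun i' => ?_) i'
      · simp
      · intro h; simpa using h3 i' (by simpa using h)
      · simp
      · intro h; simpa using h4 i i' (by simpa using h)
    · intro i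
      refine Fin.cases ?_ (fun i => ?_) i
      · intro h; simpa using h2 (by simpa using h.symm)
      · intro h; simpa using h5 i (by simpa using h)

lemma finite_of_mem {V : Type*} [Fintype V] [DecidableEq V] (Z : V → Finset ℕ)
    (P : (V → ℕ) → Prop)
    (h : ∀ g, P g → ∀ i, g i ∈ Z i) : Finite {g // P g} :=
  Set.Finite.subset (Fintype.piFinset Z).finite_toSet (fun g hg => by simpa using h g hg)

lemma card_isPathColoring : ∀ {r : ℕ} (Z : Fin r → Finset ℕ) (a b : ℕ),
    Nat.card {g : Fin r → ℕ // IsPathColoring Z a b g} = pathCount (List.ofFn Z) a b := by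
  intro r
  induction r with
  | zero =>
    intro Z a b
    have : ∀ g : Fin 0 → ℕ, IsPathColoring Z a b g ↔ a ≠ b := fun g => by
      simp [IsPathColoring]
    simp only [this, List.ofFn_zero, pathCount]
    split_ifs with h <;> simp [h]
  | succ r ih =>
    intro Z a b
    have e : {g : Fin (r + 1) → ℕ // IsPathColoring Z a b g} ≃
        Σ c : ((Z 0).erase a : Finset ℕ),
          {g : Fin r → ℕ // IsPathColoring (fun i => Z i.succ) c b g} :=
      { toFun := fun g =>
          have h := (isPathColoring_cons Z a b (g.1 0) (Fin.tail g.1)).mp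
            (by rw [Fin.cons_self_tail]; exact g.2)
          ⟨⟨g.1 0, h.1⟩, ⟨Fin.tail g.1, h.2⟩⟩
        invFun := fun p =>
          ⟨Fin.cons p.1.1 p.2.1, (isPathColoring_cons Z a b _ _).mpr ⟨p.1.2, p.2.2⟩⟩
        left_inv := fun g => Subtype.ext (Fin.cons_self_tail g.1)
        right_inv := fun p => by
          obtain ⟨⟨c, hc⟩, ⟨g, hg⟩⟩ := p
          rfl }
    have : ∀ c : ((Z 0).erase a : Finset ℕ), Finite
        {g : Fin r → ℕ // IsPathColoring (fun i => Z i.succ) c b g} :=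
      fun c => finite_of_mem (fun i => Z i.succ) _ fun g hg => hg.1
    rw [Nat.card_congr e, Nat.card_sigma, List.ofFn_succ, pathCount]
    simp only [ih]
    exact Finset.sum_coe_sort ((Z 0).erase a) fun c => pathCount (List.ofFn fun i => Z i.succ) c b

lemma isProper_theta_iff (j : ℕ) (L : Fin (2 * (j + 1) + 3) → Finset ℕ)
    (f : Fin (2 * (j + 1) + 3) → ℕ) :
    IsProperListColoring (thetaGraph (j + 1)) L f ↔
      f 0 ∈ L 0 ∧ f 1 ∈ L 1 ∧ f 2 ∈ ((L 2).erase (f 0)).erase (f 1) ∧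
        f 3 ∈ ((L 3).erase (f 0)).erase (f 1) ∧
        IsPathColoring (r := 2 * j + 1) (fun i => L i.succ.succ.succ.succ) (f 0) (f 1)
          (fun i => f i.succ.succ.succ.succ) := by
  have hadj : (∀ ⦃u w⦄, (thetaGraph (j + 1)).Adj u w → f u ≠ f w) ↔
      ∀ a b : Fin (2 * (j + 1) + 3), ((a.val = 0 ∧ b.val = 2) ∨ (a.val = 2 ∧ b.val = 1) ∨
    (a.val = 0 ∧ b.val = 3) ∨ (a.val = 3 ∧ b.val = 1) ∨
    (a.val = 0 ∧ b.val = 4) ∨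
    (4 ≤ a.val ∧ b.val = a.val + 1 ∧ a.val + 1 ≤ 2*(j+1)+2) ∨
    (a.val = 2*(j+1)+2 ∧ b.val = 1)) → f a ≠ f b := by
    simp only [thetaGraph, SimpleGraph.fromRel_adj]
    constructor
    · intro h a b hab
      exact h ⟨fun he => by subst he; omega, Or.inl hab⟩
    · rintro h u w ⟨_, hab | hab⟩
      · exact h u w hab
      · exact (h w u hab).symm
  have v0 : (0 : Fin (2 * (j + 1) + 3)).val = 0 := rfl
  have v1 : (1 : Fin (2 * (j + 1) + 3)).val = 1 := rfl
  have v2 : (2 : Fin (2 * (j + 1) + 3)).val = 2 := rfl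
  have v3 : (3 : Fin (2 * (j + 1) + 3)).val = 3 := rfl
  rw [IsProperListColoring, hadj]
  simp only [Finset.mem_erase, ne_eq]
  constructor
  · rintro ⟨hL, h⟩
    refine ⟨hL 0, hL 1, ⟨h 2 1 (by omega), fun e => h 0 2 (by omega) e.symm, hL 2⟩,
      ⟨h 3 1 (by omega), fun e => h 0 3 (by omega) e.symm, hL 3⟩, fun i => hL _, by omega,
      fun i hi => h 0 _ ?_, fun i i' hi => h _ _ ?_, fun i hi => h _ 1 ?_⟩
    · simp only [Fin.val_succ]; omega
    · have := i'.2; simp only [Fin.val_succ]; omega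
    · simp only [Fin.val_succ]; omega
  · rintro ⟨m0, m1, ⟨h21, h20, m2⟩, ⟨h31, h30, m3⟩, m4, _, hz0, hzz, hz1⟩
    have split : ∀ v : Fin (2 * (j + 1) + 3), v = 0 ∨ v = 1 ∨ v = 2 ∨ v = 3 ∨
        ∃ i : Fin (2 * j + 1), v = i.succ.succ.succ.succ := by
      intro v
      by_cases h4 : 4 ≤ v.val
      · right; right; right; right
        refine ⟨⟨v.val - 4, by have := v.2; omega⟩, ?_⟩
        apply Fin.ext; simp only [Fin.val_succ]; omega
      · have : v.val = 0 ∨ v.val = 1 ∨ v.val = 2 ∨ v.val = 3 := by omega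
        rcases this with h | h | h | h
        · exact Or.inl (Fin.ext h)
        · exact Or.inr (Or.inl (Fin.ext h))
        · exact Or.inr (Or.inr (Or.inl (Fin.ext h)))
        · exact Or.inr (Or.inr (Or.inr (Or.inl (Fin.ext h))))
    constructor
    · intro v
      rcases split v with rfl | rfl | rfl | rfl | ⟨i, rfl⟩
      exacts [m0, m1, m2, m3, m4 i]
    · intro a b hab
      rcases split a with rfl | rfl | rfl | rfl | ⟨i, rfl⟩ <;>
      rcases split b with rfl | rfl | rfl | rfl | ⟨i', rfl⟩ <;>
      simp only [v0, v1, v2, v3, Fin.val_succ] at hab <;>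
      first
        | (exfalso; omega)
        | assumption
        | exact Ne.symm (by assumption)
        | exact hz0 _ (by omega)
        | exact hz1 _ (by omega)
        | exact hzz _ _ (by omega)

lemma numListColorings_theta (j : ℕ) (L : Fin (2 * (j + 1) + 3) → Finset ℕ) :
    numListColorings (thetaGraph (j + 1)) L =
      thetaSum (L 0) (L 1) (L 2) (L 3)
        (List.ofFn fun i : Fin (2 * j + 1) => L i.succ.succ.succ.succ) := by
  let Z : Fin (2 * j + 1) → Finset ℕ := fun i => L i.succ.succ.succ.succ
  have e : {f // IsProperListColoring (thetaGraph (j + 1)) L f} ≃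
      Σ p : (L 0 ×ˢ L 1 : Finset (ℕ × ℕ)),
        ((((L 2).erase p.1.1).erase p.1.2 : Finset ℕ) ×
          (((L 3).erase p.1.1).erase p.1.2 : Finset ℕ)) ×
            {g : Fin (2 * j + 1) → ℕ // IsPathColoring Z p.1.1 p.1.2 g} :=
    { toFun := fun f =>
        have h := (isProper_theta_iff j L f.1).mp f.2
        ⟨⟨(f.1 0, f.1 1), Finset.mem_product.mpr ⟨h.1, h.2.1⟩⟩,
          ⟨⟨f.1 2, h.2.2.1⟩, ⟨f.1 3, h.2.2.2.1⟩⟩,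
          ⟨fun i => f.1 i.succ.succ.succ.succ, h.2.2.2.2⟩⟩
      invFun := fun p =>
        ⟨(Fin.cons p.1.1.1 (Fin.cons p.1.1.2 (Fin.cons p.2.1.1.1 (Fin.cons p.2.1.2.1 p.2.2.1 :
          Fin (2 * j + 1 + 1) → ℕ) : Fin (2 * j + 1 + 2) → ℕ) : Fin (2 * j + 1 + 3) → ℕ) :
          Fin (2 * j + 1 + 4) → ℕ),
          (isProper_theta_iff j L _).mpr ⟨(Finset.mem_product.mp p.1.2).1,
            (Finset.mem_product.mp p.1.2).2, p.2.1.1.2, p.2.1.2.2, p.2.2.2⟩⟩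
      left_inv := fun f => by
        apply Subtype.ext
        funext v
        refine Fin.cases rfl (fun v => ?_) v
        refine Fin.cases rfl (fun v => ?_) v
        refine Fin.cases rfl (fun v => ?_) v
        refine Fin.cases rfl (fun v => ?_) v
        rfl
      right_inv := fun p => rfl }
  have : ∀ p : (L 0 ×ˢ L 1 : Finset (ℕ × ℕ)), Finite
      {g : Fin (2 * j + 1) → ℕ // IsPathColoring Z p.1.1 p.1.2 g} :=
    fun p => finite_of_mem Z _ fun g hg => hg.1
  rw [numListColorings, Nat.card_congr e, Nat.card_sigma, thetaSum]
  simp only [Nat.card_prod, card_isPathColoring, Nat.card_eq_fintype_card, Fintype.card_prod,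
    Fintype.card_coe,
    ← pathCount_singleton]
  exact Finset.sum_coe_sort (L 0 ×ˢ L 1)
    fun p => pathCount [L 2] p.1 p.2 * pathCount [L 3] p.1 p.2 * pathCount (List.ofFn Z) p.1 p.2

/-! ### Bipartite graphs with lists of size two -/

section Bipartite

variable {V : Type*} [Fintype V] [DecidableEq V] {G : SimpleGraph V}

lemma finite_colorings (L : V → Finset ℕ) : {f | IsProperListColoring G L f}.Finite :=
  finite_of_mem L _ fun _ hg => hg.1

lemma numListColorings_mono {L' L : V → Finset ℕ} (h : ∀ v, L' v ⊆ L v) :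
    numListColorings G L' ≤ numListColorings G L :=
  Set.ncard_le_ncard (fun _ hf => ⟨fun v => h v (hf.1 v), hf.2⟩) (finite_colorings L)

lemma le_numListColorings_of_card_le {n N : ℕ}
    (h : ∀ L : V → Finset ℕ, (∀ v, (L v).card = n) → N ≤ numListColorings G L)
    {L : V → Finset ℕ} (hL : ∀ v, n ≤ (L v).card) : N ≤ numListColorings G L := by
  choose L' hL' hc using fun v => Finset.exists_subset_card_eq (hL v)
  exact (h L' hc).trans (numListColorings_mono hL')

/-- If a graph is colorable from all lists of size two, every vertex with a list of size at least three
gives one more coloring: starting from any coloring `f`, delete `f v` from the list of such a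
vertex `v`; the colorings that remain do not include `f`. -/
lemma card_add_one_le_numListColorings
    (h : ∀ L : V → Finset ℕ, (∀ v, (L v).card = 2) → 1 ≤ numListColorings G L)
    (M : Finset V) : ∀ L : V → Finset ℕ, (∀ v, 2 ≤ (L v).card) → (∀ v ∈ M, 3 ≤ (L v).card) →
      M.card + 1 ≤ numListColorings G L := by
  induction M using Finset.induction_on with
  | empty => intro L hL _; simpa using le_numListColorings_of_card_le h hL
  | insert v M hv ih =>
    intro L h2 h3
    have hpos := (Nat.le_add_left 1 _).trans
      (ih L h2 fun w hw => h3 w (Finset.mem_insert_of_mem hw))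
    obtain ⟨f, hf⟩ := (Set.ncard_pos (finite_colorings L)).mp hpos
    have hle := ih (Function.update L v ((L v).erase (f v))) (by
        intro w
        by_cases hw : w = v
        · subst hw
          have := h3 w (Finset.mem_insert_self _ _)
          rw [Function.update_self, Finset.card_erase_of_mem (hf.1 w)]; omega
        · rw [Function.update_of_ne hw]; exact h2 w) (by
        intro w hw
        rw [Function.update_of_ne (show w ≠ v by rintro rfl; exact hv hw)]
        exact h3 w (Finset.mem_insert_of_mem hw))
    rw [Finset.card_insert_of_notMem hv]
    refine Nat.succ_le_of_lt (lt_of_le_of_lt hle (Set.ncard_lt_ncard ⟨?_, ?_⟩ (finite_colorings L)))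
    · intro g hg
      refine ⟨fun w => ?_, hg.2⟩
      have := hg.1 w
      by_cases hw : w = v
      · subst hw; rw [Function.update_self] at this; exact Finset.mem_of_mem_erase this
      · rwa [Function.update_of_ne hw] at this
    · intro hsub
      have := (hsub hf).1 v
      simp at this

lemma two_le_numListColorings {L : V → Finset ℕ} {f g : V → ℕ}
    (hf : IsProperListColoring G L f) (hg : IsProperListColoring G L g) (hne : f ≠ g) :
    2 ≤ numListColorings G L :=
  (Set.one_lt_ncard (finite_colorings L)).mpr ⟨f, hf, g, hg, hne⟩

/-- A color `d` common to all lists can be used on either side of the bipartition. -/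
lemma two_le_of_common [Nonempty V] {β : V → Bool} (hβ : ∀ u w, G.Adj u w → β u ≠ β w)
    {L : V → Finset ℕ} (hL : ∀ v, (L v).card = 2) (d : ℕ) (hd : ∀ v, d ∈ L v) :
    2 ≤ numListColorings G L := by
  have : ∀ v, ∃ o ∈ L v, o ≠ d := fun v =>
    Finset.exists_mem_ne (by rw [hL v]; norm_num) d
  choose o ho hod using this
  refine two_le_numListColorings (f := fun v => if β v then d else o v)
    (g := fun v => if β v then o v else d) ⟨fun v => ?_, fun u w h => ?_⟩
    ⟨fun v => ?_, fun u w h => ?_⟩ ?_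
  · dsimp only; split_ifs
    exacts [hd v, ho v]
  · have := hβ u w h
    cases hu : β u <;> cases hw : β w <;> simp only [hu, hw, ne_eq, not_true] at this ⊢
    exacts [hod u, (hod w).symm]
  · dsimp only; split_ifs
    exacts [ho v, hd v]
  · have := hβ u w h
    cases hu : β u <;> cases hw : β w <;> simp only [hu, hw, ne_eq, not_true] at this ⊢
    exacts [(hod w).symm, hod u]
  · intro h
    obtain ⟨v⟩ := ‹Nonempty V›
    have := congrFun h v
    split_ifs at this
    exacts [hod v this.symm, hod v this]

/-- Suppose `d` is missing only at `s` and `e` only at `t`. Alternating `d` and `e` along the bipartition,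
with `e` on the side of `s`, gives a proper coloring `φ`, which respects the lists except possibly at
`t`. Suitable changes at `s` and `t` turn `φ` into two colorings from the lists. -/
lemma two_le_of_missing_once {β : V → Bool} (hβ : ∀ u w, G.Adj u w → β u ≠ β w)
    {L : V → Finset ℕ} (hL : ∀ v, (L v).card = 2)
    {d e : ℕ} (hde : d ≠ e) {s t : V} (hs : ∀ v, d ∉ L v ↔ v = s)
    (ht : ∀ v, e ∉ L v ↔ v = t) : 2 ≤ numListColorings G L := by
  set φ : V → ℕ := fun v => if β v = β s then e else d with hφ
  have hφde : ∀ v, φ v = d ∨ φ v = e := fun v => by simp only [hφ]; split_ifs <;> simp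
  have hφL : ∀ v, v ≠ s → v ≠ t → φ v ∈ L v := by
    intro v h1 h2
    have hd : d ∈ L v := by by_contra h; exact h1 ((hs v).mp h)
    have he : e ∈ L v := by by_contra h; exact h2 ((ht v).mp h)
    rcases hφde v with h | h <;> rwa [h]
  -- Changing `φ` to colors other than `d`, `e`, and only on the side of `s`, keeps it proper.
  have proper : ∀ f : V → ℕ, (∀ v, f v ∈ L v) →
      (∀ v, f v = φ v ∨ f v ≠ d ∧ f v ≠ e ∧ β v = β s) → IsProperListColoring G L f := by
    refine fun f h1 h2 => ⟨h1, fun u w huw hfe => ?_⟩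
    have hb := hβ u w huw
    rcases h2 u with hu | ⟨hu1, hu2, hu3⟩ <;> rcases h2 w with hw | ⟨hw1, hw2, hw3⟩
    · rw [hu, hw] at hfe
      simp only [hφ] at hfe
      split_ifs at hfe with h3 h4 h4
      · exact hb (h3.trans h4.symm)
      · exact hde hfe.symm
      · exact hde hfe
      · revert hb h3 h4; cases β u <;> cases β w <;> cases β s <;> simp
    · rcases hφde u with h | h
      · exact hw1 (hfe ▸ hu.trans h)
      · exact hw2 (hfe ▸ hu.trans h)
    · rcases hφde w with h | h
      · exact hu1 (hfe.trans (hw.trans h))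
      · exact hu2 (hfe.trans (hw.trans h))
    · exact hb (hu3.trans hw3.symm)
  have hds : d ∉ L s := (hs s).mpr rfl
  have het : e ∉ L t := (ht t).mpr rfl
  have ne_of : ∀ {x y : ℕ} {S : Finset ℕ}, x ∈ S → y ∉ S → x ≠ y := fun h1 h2 h => h2 (h ▸ h1)
  by_cases hst : s = t
  -- One vertex misses both `d` and `e`: both of its colors can be used there.
  · subst hst
    obtain ⟨p, q, hpq, hLs⟩ := Finset.card_eq_two.mp (hL s)
    have aux : ∀ x ∈ L s, IsProperListColoring G L (Function.update φ s x) := by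
      intro x hx
      apply proper <;> intro v <;> by_cases hv : v = s
      · subst hv; simpa using hx
      · simpa [hv] using hφL v hv hv
      · subst hv; right; simpa using ⟨ne_of hx hds, ne_of hx het⟩
      · left; simp [hv]
    exact two_le_numListColorings (aux p (by simp [hLs])) (aux q (by simp [hLs]))
      fun h => hpq (by simpa using congrFun h s)
  · have hes : e ∈ L s := by by_contra h; exact hst ((ht s).mp h)
    have hdt : d ∈ L t := by by_contra h; exact hst ((hs t).mp h).symm
    obtain ⟨p, hp, hpe⟩ := Finset.exists_mem_ne (by rw [hL s]; norm_num) e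
    obtain ⟨q, hq, hqd⟩ := Finset.exists_mem_ne (by rw [hL t]; norm_num) d
    have hpd := ne_of hp hds
    have hqe := ne_of hq het
    have hts : t ≠ s := fun h => hst h.symm
    have hφs : φ s = e := by simp [hφ]
    -- At `t`, the coloring `φ` has the missing color `e` if `t` is on the side of `s`, and is then
    -- replaced by `q`; otherwise it has `d`, which is in the list. At `s`, both colors work.
    by_cases hβt : β t = β s
    · have aux : ∀ x ∈ L s, x ≠ d → (x = e ∨ x ≠ e) →
          IsProperListColoring G L (Function.update (Function.update φ t q) s x) := by
        intro x hx hxd hxe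
        apply proper <;> intro v <;> by_cases hv : v = s
        · subst hv; simpa using hx
        · by_cases hv' : v = t
          · subst hv'; simpa [hv] using hq
          · simpa [hv, hv'] using hφL v hv hv'
        · subst hv
          rcases hxe with h | h
          · left; simp [h, hφs]
          · right; simpa using ⟨hxd, h⟩
        · by_cases hv' : v = t
          · subst hv'; right; simpa [hv] using ⟨hqd, hqe, hβt⟩
          · left; simp [hv, hv']
      exact two_le_numListColorings (aux p hp hpd (Or.inr hpe)) (aux e hes hde.symm (Or.inl rfl))
        fun h => hpe (by simpa using congrFun h s)
    · have hφt : φ t = d := by simp [hφ, hβt]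
      have aux : ∀ x ∈ L s, x ≠ d → (x = e ∨ x ≠ e) →
          IsProperListColoring G L (Function.update φ s x) := by
        intro x hx hxd hxe
        apply proper <;> intro v <;> by_cases hv : v = s
        · subst hv; simpa using hx
        · by_cases hv' : v = t
          · subst hv'; simpa [hv, hφt] using hdt
          · simpa [hv] using hφL v hv hv'
        · subst hv
          rcases hxe with h | h
          · left; simp [h, hφs]
          · right; simpa using ⟨hxd, h⟩
        · left; simp [hv]
      exact two_le_numListColorings (aux p hp hpd (Or.inr hpe)) (aux e hes hde.symm (Or.inl rfl))
        fun h => hpe (by simpa using congrFun h s)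

/-- In a bipartite graph with lists of size two and at most one coloring, every color is missing
somewhere, and two different colors are together missing at least three times. -/
lemma missing_of_numListColorings_le_one [Nonempty V] {β : V → Bool} (hβ : ∀ u w, G.Adj u w → β u ≠ β w)
    {L : V → Finset ℕ} (hL : ∀ v, (L v).card = 2)
    (h1 : numListColorings G L ≤ 1)
    {d e : ℕ} (hde : d ≠ e) :
    3 ≤ (Finset.univ.filter fun v => d ∉ L v).card + (Finset.univ.filter fun v => e ∉ L v).card := by
  have hpos : ∀ c, 1 ≤ (Finset.univ.filter fun v => c ∉ L v).card := by
    intro c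
    by_contra! hc
    have hc : (Finset.univ.filter fun v => c ∉ L v) = ∅ := Finset.card_eq_zero.mp (by omega)
    have := two_le_of_common hβ hL c fun v => by
      by_contra hv
      have : v ∈ Finset.univ.filter fun v => c ∉ L v := by simp [hv]
      simp [hc] at this
    omega
  by_contra! hlt
  have hd := hpos d
  have he := hpos e
  obtain ⟨s, hs⟩ := Finset.card_eq_one.mp (show (Finset.univ.filter fun v => d ∉ L v).card = 1 by omega)
  obtain ⟨t, ht⟩ := Finset.card_eq_one.mp (show (Finset.univ.filter fun v => e ∉ L v).card = 1 by omega)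
  have := two_le_of_missing_once hβ hL hde (s := s) (t := t)
    (fun v => by simpa using Finset.ext_iff.mp hs v) (fun v => by simpa using Finset.ext_iff.mp ht v)
  omega

end Bipartite

/-! ### Joining the theta graph with a vertex -/

lemma isProper_joinK1_iff {V : Type*} (G : SimpleGraph V) (L : Option V → Finset ℕ)
    (f : Option V → ℕ) :
    IsProperListColoring (joinK1 G) L f ↔ f none ∈ L none ∧
      IsProperListColoring G (fun v => (L (some v)).erase (f none)) fun v => f (some v) := by
  simp only [IsProperListColoring, joinK1, SimpleGraph.fromRel_adj, Finset.mem_erase]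
  constructor
  · rintro ⟨h1, h2⟩
    exact ⟨h1 none, fun v => ⟨h2 (by simp), h1 _⟩,
      fun u w huw => h2 ⟨by simpa using huw.ne, Or.inl (Or.inr ⟨u, w, rfl, rfl, huw⟩)⟩⟩
  · rintro ⟨h0, h1, h2⟩
    refine ⟨fun v => ?_, ?_⟩
    · cases v
      exacts [h0, (h1 _).2]
    · rintro u w ⟨_, (⟨x, rfl, rfl⟩ | ⟨x, y, rfl, rfl, h⟩) | (⟨x, rfl, rfl⟩ | ⟨x, y, rfl, rfl, h⟩)⟩
      exacts [(h1 x).1.symm, h2 h, (h1 x).1, (h2 h).symm]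

/-- Condition on the color of the apex. -/
lemma numListColorings_joinK1 {V : Type*} [Fintype V] [DecidableEq V] (G : SimpleGraph V)
    (L : Option V → Finset ℕ) :
    numListColorings (joinK1 G) L =
      ∑ c ∈ L none, numListColorings G fun v => (L (some v)).erase c := by
  have e : {f // IsProperListColoring (joinK1 G) L f} ≃
      Σ c : L none, {g // IsProperListColoring G (fun v => (L (some v)).erase c) g} :=
    { toFun := fun f =>
        have h := (isProper_joinK1_iff G L f.1).mp f.2
        ⟨⟨f.1 none, h.1⟩, ⟨fun v => f.1 (some v), h.2⟩⟩
      invFun := fun p => ⟨fun o => o.elim p.1.1 p.2.1,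
        (isProper_joinK1_iff G L _).mpr ⟨p.1.2, p.2.2⟩⟩
      left_inv := fun f => Subtype.ext (by funext o; cases o <;> rfl)
      right_inv := fun p => rfl }
  have : ∀ c : L none, Finite
      {g // IsProperListColoring G (fun v => (L (some v)).erase c) g} :=
    fun c => finite_of_mem _ _ fun g hg => hg.1
  rw [numListColorings, Nat.card_congr e, Nat.card_sigma]
  exact Finset.sum_coe_sort (L none) fun c => numListColorings G fun v => (L (some v)).erase c

/-- The bipartition of `Θ(2,2,2k)`: `true` on the neighbours `2`, `3`, `4` of the end `0` and on every
second vertex of the long path. -/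
def thetaSide (k : ℕ) (v : Fin (2 * k + 3)) : Bool :=
  v.val = 2 ∨ v.val = 3 ∨ 4 ≤ v.val ∧ v.val % 2 = 0

lemma thetaSide_ne (k : ℕ) (u w : Fin (2 * k + 3)) (h : (thetaGraph k).Adj u w) :
    thetaSide k u ≠ thetaSide k w := by
  rw [thetaGraph, SimpleGraph.fromRel_adj] at h
  simp only [thetaSide, ne_eq, decide_eq_decide]
  omega

lemma theta_two_choosable (j : ℕ) (L : Fin (2 * (j + 1) + 3) → Finset ℕ)
    (hL : ∀ v, (L v).card = 2) : 1 ≤ numListColorings (thetaGraph (j + 1)) L := by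
  rw [numListColorings_theta]
  refine thetaSum_pos (j := j) (hL _) (hL _) (hL _) (hL _) (by simp) ?_
  simp only [List.mem_ofFn]
  rintro _ ⟨i, rfl⟩
  exact hL _

lemma thetaConst_le_numListColorings {q : ℕ} (hq : 1 ≤ q) (j : ℕ)
    (L : Fin (2 * (j + 1) + 3) → Finset ℕ) (hL : ∀ v, (L v).card = q + 2) :
    thetaConst q (pathMin q j) ≤ numListColorings (thetaGraph (j + 1)) L := by
  rw [numListColorings_theta]
  refine thetaSum_ge hq (hL _) (hL _) (hL _) (hL _) (by simp) ?_
  simp only [List.mem_ofFn]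
  rintro _ ⟨i, rfl⟩
  exact hL _

/-- The case `m = 3`. For a color `c` of the apex let `M c` be the number of vertices whose lists miss `c`.
Conditioned on `c` there are at least `M c + 1` colorings. If for some `c` there is only one, then
`M c = 0` and the lists without `c` have size two, so the other two colors `d`, `e` satisfy
`M d + M e ≥ 3`, and the total is at least `1 + 3 + 2 = 6`. -/
lemma six_le_joinK1_theta (j : ℕ) (L : Option (Fin (2 * (j + 1) + 3)) → Finset ℕ)
    (hL : ∀ v, (L v).card = 3) : 6 ≤ numListColorings (joinK1 (thetaGraph (j + 1))) L := by
  rw [numListColorings_joinK1]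
  have hcard : ∀ c v, 2 ≤ ((L (some v)).erase c).card := fun c v => le_card_erase (q := 1) (hL _) c
  have hM : ∀ c, (Finset.univ.filter fun v => c ∉ L (some v)).card + 1 ≤
      numListColorings (thetaGraph (j + 1)) fun v => (L (some v)).erase c := by
    intro c
    refine card_add_one_le_numListColorings (theta_two_choosable j) _ _ (hcard c) fun v hv => ?_
    rw [Finset.mem_filter] at hv
    rw [Finset.erase_eq_of_notMem hv.2, hL]
  by_cases h2 : ∀ c ∈ L none,
      2 ≤ numListColorings (thetaGraph (j + 1)) fun v => (L (some v)).erase c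
  · have := Finset.card_nsmul_le_sum _ _ _ h2
    rwa [hL] at this
  push Not at h2
  obtain ⟨c, hc, hlt⟩ := h2
  have hmem : ∀ v, c ∈ L (some v) := by
    intro v
    by_contra hv
    have h0 : (Finset.univ.filter fun v => c ∉ L (some v)) = ∅ :=
      Finset.card_eq_zero.mp (by have := hM c; omega)
    have : v ∈ Finset.univ.filter fun v => c ∉ L (some v) := by simp [hv]
    simp [h0] at this
  obtain ⟨d, e, hde, hce⟩ := Finset.card_eq_two.mp
    (show ((L none).erase c).card = 2 by rw [Finset.card_erase_of_mem hc, hL])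
  have hdc : d ≠ c := Finset.ne_of_mem_erase (s := L none) (by rw [hce]; simp)
  have hec : e ≠ c := Finset.ne_of_mem_erase (s := L none) (by rw [hce]; simp)
  have h3 := missing_of_numListColorings_le_one (thetaSide_ne (j + 1))
    (L := fun v => (L (some v)).erase c)
    (fun v => by rw [Finset.card_erase_of_mem (hmem v), hL]) (by omega) hde
  simp only [Finset.mem_erase, ne_eq, hdc, hec, not_false_eq_true, true_and] at h3
  rw [← Finset.add_sum_erase _ _ hc, hce, Finset.sum_pair hde]
  have := hM c
  have := hM d
  have := hM e
  omega

/-- The lower bound on which the theorem rests. For `q = 0` the right side of `chromPoly_joinK1_theta` is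
`6`; for `q ≥ 1` every color of the apex contributes at least `thetaConst q (pathMin q j)`. -/
lemma thetaConst_mul_le_joinK1 (q j : ℕ) (L : Option (Fin (2 * (j + 1) + 3)) → Finset ℕ)
    (hL : ∀ v, (L v).card = q + 3) :
    (q + 3) * thetaConst q (pathMin q j) ≤ numListColorings (joinK1 (thetaGraph (j + 1))) L := by
  rcases Nat.eq_zero_or_pos q with rfl | hq
  · have h0 : pathMin 0 j = 0 := by have := pathMin_mul 0 j; simp at this; omega
    rw [h0]
    exact six_le_joinK1_theta j L hL
  · rw [numListColorings_joinK1, ← hL none, ← smul_eq_mul]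
    exact Finset.card_nsmul_le_sum _ _ _ fun c _ =>
      le_numListColorings_of_card_le (thetaConst_le_numListColorings hq j)
        fun v => le_card_erase (q := q + 1) (hL _) c

lemma chromPoly_joinK1_theta (q j : ℕ) :
    chromPoly (joinK1 (thetaGraph (j + 1))) (q + 3) = (q + 3) * thetaConst q (pathMin q j) := by
  rw [chromPoly, numListColorings_joinK1]
  rw [Finset.sum_congr rfl fun c hc => ?_, Finset.sum_const, Nat.card_Icc, smul_eq_mul,
    Nat.add_sub_cancel]
  rw [numListColorings_theta]
  refine thetaSum_const ?_ (by simp) ?_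
  · rw [Finset.card_erase_of_mem hc, Nat.card_Icc]; rfl
  · simp only [List.mem_ofFn]
    rintro _ ⟨i, rfl⟩
    rfl

lemma chromaticNumber_joinK1_theta (k : ℕ) : (joinK1 (thetaGraph k)).chromaticNumber = 3 := by
  apply le_antisymm
  · have hcol : (joinK1 (thetaGraph k)).Colorable 3 := by
      refine ⟨SimpleGraph.Coloring.mk
        (fun o => o.elim 2 fun v => if thetaSide k v then 0 else 1) ?_⟩
      intro u w h
      have h' := ((joinK1 (thetaGraph k)).ne_of_adj h)
      rw [joinK1, SimpleGraph.fromRel_adj] at h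
      have key : ∀ x y, (thetaGraph k).Adj x y →
          (if thetaSide k x then (0 : Fin 3) else 1) ≠ if thetaSide k y then 0 else 1 := by
        intro x y hxy
        have := thetaSide_ne k x y hxy
        cases hx : thetaSide k x <;> cases hy : thetaSide k y <;> simp_all
      have key2 : ∀ x, (2 : Fin 3) ≠ if thetaSide k x then 0 else 1 := by
        intro x; split_ifs <;> decide
      obtain ⟨_, (⟨x, rfl, rfl⟩ | ⟨x, y, rfl, rfl, h⟩) | (⟨x, rfl, rfl⟩ | ⟨x, y, rfl, rfl, h⟩)⟩ := h
      exacts [key2 x, key x y h, (key2 x).symm, (key x y h).symm]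
    exact_mod_cast hcol.chromaticNumber_le
  -- The apex and the edge between `0` and `2` form a triangle.
  · let a : Fin (2 * k + 3) := ⟨0, by omega⟩
    let b : Fin (2 * k + 3) := ⟨2, by omega⟩
    have hab : a ≠ b := by simp [a, b]
    have hadj : (thetaGraph k).Adj a b := by
      rw [thetaGraph, SimpleGraph.fromRel_adj]
      exact ⟨hab, Or.inl (Or.inl ⟨rfl, rfl⟩)⟩
    have hclique : (joinK1 (thetaGraph k)).IsClique
        (({none, some a, some b} : Finset (Option (Fin (2 * k + 3)))) : Set _) := by
      rw [SimpleGraph.isClique_iff, Set.Pairwise]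
      simp only [Finset.coe_insert, Finset.coe_singleton, Set.mem_insert_iff,
        Set.mem_singleton_iff, joinK1, SimpleGraph.fromRel_adj]
      have := hadj.symm
      rintro x (rfl | rfl | rfl) y (rfl | rfl | rfl) hxy <;> simp_all
    have := hclique.card_le_chromaticNumber
    rwa [Finset.card_eq_three.mpr ⟨none, some a, some b, by simp, by simp, by simpa using hab, rfl⟩]
      at this

/-- For every `k ≥ 1`, the graph `G = K₁ ∨ Θ(2,2,2k)` is enumeratively
chromatic-choosable: `χ(G) = 3` and `P_ℓ(G,m) = P(G,m)` for every integer `m ≥ 3`. -/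
theorem joinK1_theta_enumeratively_chromatic_choosable (k : ℕ) (hk : 1 ≤ k) :
    (joinK1 (thetaGraph k)).chromaticNumber = 3 ∧
    ∀ m : ℕ, 3 ≤ m →
      listColorFn (joinK1 (thetaGraph k)) m = chromPoly (joinK1 (thetaGraph k)) m := by
  refine ⟨chromaticNumber_joinK1_theta k, fun m hm => ?_⟩
  obtain ⟨j, rfl⟩ := Nat.exists_eq_add_of_le' hk
  obtain ⟨q, rfl⟩ := Nat.exists_eq_add_of_le' hm
  apply le_antisymm
  · exact Nat.sInf_le ⟨_, fun _ => by simp, rfl⟩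
  · refine le_csInf ⟨_, fun _ => Finset.Icc 1 (q + 3), fun _ => by simp, rfl⟩ ?_
    rintro _ ⟨L, hL, rfl⟩
    rw [chromPoly_joinK1_theta]
    exact thetaConst_mul_le_joinK1 q j L hL
end

section
/- Let G = K_{2,2,4} be the complete tripartite graph with partite sets of sizes 2, 2, and 4. Then χ(G) = 3, P(G,3) = 6, and P_ℓ(G,3) ≤ 4; in particular G is not weakly enumeratively chromatic-choosable. -/
/-- The part of a vertex of `K_{2,2,4}` (partite sets of sizes 2, 2, 4). -/
def K224part : (Fin 2 ⊕ Fin 2 ⊕ Fin 4) → Fin 3 :=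
  Sum.elim (fun _ => 0) (Sum.elim (fun _ => 1) (fun _ => 2))

/-- The complete tripartite graph `K_{2,2,4}`: two vertices are adjacent exactly when they
lie in different partite sets. -/
def K224 : SimpleGraph (Fin 2 ⊕ Fin 2 ⊕ Fin 4) :=
  SimpleGraph.fromRel (fun a b => K224part a ≠ K224part b)

lemma K224_adj (u w : Fin 2 ⊕ Fin 2 ⊕ Fin 4) :
    K224.Adj u w ↔ K224part u ≠ K224part w := by
  rw [K224, SimpleGraph.fromRel_adj]
  constructor
  · rintro ⟨-, h | h⟩
    exacts [h, h.symm]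
  · intro h
    exact ⟨fun e => h (congrArg _ e), Or.inl h⟩

lemma isProperListColoring_K224 (L : (Fin 2 ⊕ Fin 2 ⊕ Fin 4) → Finset ℕ)
    (f : (Fin 2 ⊕ Fin 2 ⊕ Fin 4) → ℕ) :
    IsProperListColoring K224 L f ↔
      (((∀ i, f (.inl i) ∈ L (.inl i)) ∧ (∀ i, f (.inr (.inl i)) ∈ L (.inr (.inl i)))) ∧
        (∀ i j, f (.inl i) ≠ f (.inr (.inl j)))) ∧
      ∀ k, f (.inr (.inr k)) ∈ L (.inr (.inr k)) ∧
        (∀ i, f (.inl i) ≠ f (.inr (.inr k))) ∧ (∀ i, f (.inr (.inl i)) ≠ f (.inr (.inr k))) := by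
  simp only [IsProperListColoring, K224_adj, Sum.forall, K224part, Sum.elim_inl, Sum.elim_inr]
  simp only [ne_eq, not_true_eq_false, Fin.reduceEq, not_false_eq_true, false_implies,
    true_implies, implies_true, true_and, and_true]
  constructor
  · rintro ⟨⟨h1, h2, h3⟩, h4, h5, h6⟩
    grind
  · rintro ⟨⟨⟨h1, h2⟩, h3⟩, h4⟩
    grind

/-- The pairs of colorings of the two parts of size 2 from their lists that share no color. -/
def smallColorings (L : (Fin 2 ⊕ Fin 2 ⊕ Fin 4) → Finset ℕ) :
    Finset ((Fin 2 → ℕ) × (Fin 2 → ℕ)) :=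
  (Fintype.piFinset (fun i => L (.inl i)) ×ˢ Fintype.piFinset (fun i => L (.inr (.inl i)))).filter
    (fun p => ∀ i j, p.1 i ≠ p.2 j)

/-- The colors available at the vertex `k` of the part of size 4 once the parts of size 2 are
colored by `p`. -/
def available (L : (Fin 2 ⊕ Fin 2 ⊕ Fin 4) → Finset ℕ) (p : (Fin 2 → ℕ) × (Fin 2 → ℕ))
    (k : Fin 4) : Finset ℕ :=
  (L (.inr (.inr k))).filter (fun c => (∀ i, p.1 i ≠ c) ∧ ∀ i, p.2 i ≠ c)

/-- After a coloring of the two small parts, the remaining vertices are colored independently. -/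
lemma numListColorings_K224 (L : (Fin 2 ⊕ Fin 2 ⊕ Fin 4) → Finset ℕ) :
    numListColorings K224 L = ∑ p ∈ smallColorings L, ∏ k, (available L p k).card := by
  let S := (smallColorings L).sigma (fun p => Fintype.piFinset (available L p))
  have key : {f // IsProperListColoring K224 L f} ≃ S :=
    { toFun := fun f => ⟨⟨(fun i => f.1 (.inl i), fun i => f.1 (.inr (.inl i))),
          fun k => f.1 (.inr (.inr k))⟩, by
        have := (isProperListColoring_K224 L f.1).1 f.2
        simpa [S, smallColorings, available, Finset.mem_sigma] using this⟩
      invFun := fun s => ⟨Sum.elim s.1.1.1 (Sum.elim s.1.1.2 s.1.2), by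
        have := s.2
        rw [isProperListColoring_K224]
        simpa [S, smallColorings, available, Finset.mem_sigma] using this⟩
      left_inv := fun f => by
        ext v
        rcases v with v | v | v <;> rfl
      right_inv := fun s => rfl }
  rw [numListColorings, Nat.card_congr key, Nat.card_eq_fintype_card, Fintype.card_coe,
    Finset.card_sigma]
  simp only [Fintype.card_piFinset]

/-- A 3-assignment for `K_{2,2,4}` with only four proper colorings. -/
def badLists : (Fin 2 ⊕ Fin 2 ⊕ Fin 4) → Finset ℕ :=
  Sum.elim ![{0, 1, 2}, {0, 3, 4}] (Sum.elim ![{0, 1, 2}, {0, 3, 4}]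
    ![{0, 1, 3}, {0, 1, 4}, {0, 2, 3}, {0, 2, 4}])

lemma numListColorings_badLists : numListColorings K224 badLists = 4 := by
  rw [numListColorings_K224]
  decide +kernel

lemma chromPoly_K224_three : chromPoly K224 3 = 6 := by
  rw [chromPoly, numListColorings_K224]
  decide +kernel

lemma chromaticNumber_K224 : K224.chromaticNumber = 3 := by
  apply le_antisymm
  · have h : K224.Colorable 3 :=
      ⟨SimpleGraph.Coloring.mk K224part fun {u w} h => (K224_adj u w).1 h⟩
    exact h.chromaticNumber_le
  · have h : K224.IsClique
        (({.inl 0, .inr (.inl 0), .inr (.inr 0)} : Finset (Fin 2 ⊕ Fin 2 ⊕ Fin 4)) :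
          Set (Fin 2 ⊕ Fin 2 ⊕ Fin 4)) := by
      intro u hu w hw huw
      rw [K224_adj]
      revert u w
      decide
    exact h.card_le_chromaticNumber

/-- For `G = K_{2,2,4}`: `χ(G) = 3`, `P(G,3) = 6`, and `P_ℓ(G,3) ≤ 4`; in particular
`P_ℓ(G,3) ≠ P(G,3)`, so `G` is not weakly enumeratively chromatic-choosable. -/
theorem K224_not_weakly_enumeratively_chromatic_choosable :
    K224.chromaticNumber = 3 ∧ chromPoly K224 3 = 6 ∧ listColorFn K224 3 ≤ 4 ∧
    listColorFn K224 3 ≠ chromPoly K224 3 := by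
  have h : listColorFn K224 3 ≤ 4 :=
    Nat.sInf_le ⟨badLists, by decide, numListColorings_badLists⟩
  refine ⟨chromaticNumber_K224, chromPoly_K224_three, h, ?_⟩
  rw [chromPoly_K224_three]
  omega
end
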